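/- Convex Positivstellensatz: let f = f* ∈ M_d(ℂ⟨x⟩), let L = I + A₁x₁ + ⋯ + Aₙxₙ be a monic hermitian linear matrix pencil of size e, and set δ = ⌊(deg f)/2⌋. Then f(X) is positive semidefinite for every k ∈ ℕ and every X ∈ D_L(k) if and only if there exist finitely many s₁,…,s_M ∈ M_d(ℂ⟨x⟩) and v₁,…,v_N ∈ ℂ⟨x⟩^{e×d}, all of degree at most δ, such that f = Σ_{i=1}^M sᵢ*sᵢ + Σ_{j=1}^N vⱼ*Lvⱼ in M_d(ℂ⟨x⟩). -/

import Mathlib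

open scoped Kronecker Matrix ComplexOrder

/-- Noncommutative polynomials: the free `ℂ`-algebra `ℂ⟨x₁,…,xₙ⟩` on `n` generators. -/
abbrev FreeAlg (n : ℕ) := FreeAlgebra ℂ (Fin n)

/-- Evaluation of a matrix of noncommutative polynomials at an `n`-tuple of `k × k` complex
matrices, i.e. the image under `id ⊗ ev_X`. -/
noncomputable def evalM {n k : ℕ} {I J : Type*} (f : Matrix I J (FreeAlg n))
    (X : Fin n → Matrix (Fin k) (Fin k) ℂ) : Matrix (I × Fin k) (J × Fin k) ℂ :=
  fun p q => FreeAlgebra.lift ℂ X (f p.1 q.1) p.2 q.2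

/-- The conjugate-linear involutive anti-automorphism on `ℂ⟨x⟩` fixing the generators:
reverse each word and conjugate each coefficient. -/
noncomputable def nstar {n : ℕ} (a : FreeAlg n) : FreeAlg n :=
  (FreeAlgebra.equivMonoidAlgebraFreeMonoid).symm
    (MonoidAlgebra.ofCoeff <| Finsupp.mapDomain FreeMonoid.reverse
      (Finsupp.mapRange (starRingEnd ℂ) (map_zero _)
        ((FreeAlgebra.equivMonoidAlgebraFreeMonoid) a).coeff))

/-- Conjugate-transpose of a matrix over `ℂ⟨x⟩`. -/
noncomputable def adjM {n : ℕ} {I J : Type*} (f : Matrix I J (FreeAlg n)) :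
    Matrix J I (FreeAlg n) :=
  fun i j => nstar (f j i)

/-- A matrix `f` over `ℂ⟨x⟩` is hermitian if `f = f*`. -/
def IsHermPoly {n : ℕ} {I : Type*} (f : Matrix I I (FreeAlg n)) : Prop :=
  ∀ i j, f i j = nstar (f j i)

/-- Evaluation `L(X) = A₀ ⊗ I + ∑ⱼ Aⱼ ⊗ Xⱼ` of a linear matrix pencil at a matrix tuple. -/
noncomputable def pencilK {n d k : ℕ} (A0 : Matrix (Fin d) (Fin d) ℂ)
    (A : Fin n → Matrix (Fin d) (Fin d) ℂ) (X : Fin n → Matrix (Fin k) (Fin k) ℂ) :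
    Matrix (Fin d × Fin k) (Fin d × Fin k) ℂ :=
  A0 ⊗ₖ (1 : Matrix (Fin k) (Fin k) ℂ) + ∑ j, A j ⊗ₖ X j

/-- Evaluation `L(X) = I ⊗ I + ∑ⱼ Aⱼ ⊗ Xⱼ` of a monic linear matrix pencil. -/
noncomputable def monicK {n d k : ℕ} (A : Fin n → Matrix (Fin d) (Fin d) ℂ)
    (X : Fin n → Matrix (Fin k) (Fin k) ℂ) : Matrix (Fin d × Fin k) (Fin d × Fin k) ℂ :=
  1 + ∑ j, A j ⊗ₖ X j

/-- The monic pencil `I + ∑ⱼ Aⱼ xⱼ` as a matrix of noncommutative polynomials. -/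
noncomputable def monicPoly {n e : ℕ} (A : Fin n → Matrix (Fin e) (Fin e) ℂ) :
    Matrix (Fin e) (Fin e) (FreeAlg n) :=
  1 + ∑ j, (A j).map (fun c => c • FreeAlgebra.ι ℂ j)

/-- The subspace of noncommutative polynomials of degree at most `δ`:
the `ℂ`-linear span of products of at most `δ` generators. -/
noncomputable def degLE (n δ : ℕ) : Submodule ℂ (FreeAlg n) :=
  Submodule.span ℂ
    {a | ∃ w : List (Fin n), w.length ≤ δ ∧ a = (w.map (FreeAlgebra.ι ℂ)).prod}

/-- A matrix over `ℂ⟨x⟩` has degree at most `δ` if each entry does. -/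
def matDegLE {n : ℕ} {I J : Type*} (f : Matrix I J (FreeAlg n)) (δ : ℕ) : Prop :=
  ∀ i j, f i j ∈ degLE n δ

/-- The degree of a matrix of noncommutative polynomials: the least `δ` such that every entry
lies in the span of words of length at most `δ`. -/
noncomputable def matDeg {n : ℕ} {I J : Type*} (f : Matrix I J (FreeAlg n)) : ℕ :=
  sInf {δ | matDegLE f δ}

/-- Evaluation of `f` at the zero scalar tuple, `f(0) ∈ M_d(ℂ)`. -/
noncomputable def evalZero {n : ℕ} {I J : Type*} (f : Matrix I J (FreeAlg n)) :
    Matrix I J ℂ :=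
  f.map (⇑(FreeAlgebra.lift ℂ (fun _ : Fin n => (0 : ℂ))))


/-! ### Words and the involution -/

/-- The monomial attached to a word. -/
noncomputable def wd {n : ℕ} (w : List (Fin n)) : FreeAlg n := (w.map (FreeAlgebra.ι ℂ)).prod

theorem wd_nil {n : ℕ} : wd ([] : List (Fin n)) = 1 := rfl

theorem wd_cons {n : ℕ} (a : Fin n) (w : List (Fin n)) :
    wd (a :: w) = FreeAlgebra.ι ℂ a * wd w := by simp [wd]

theorem wd_append {n : ℕ} (u w : List (Fin n)) : wd (u ++ w) = wd u * wd w := by simp [wd]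

theorem equiv_wd {n : ℕ} (w : List (Fin n)) :
    FreeAlgebra.equivMonoidAlgebraFreeMonoid (R := ℂ) (wd w) =
      MonoidAlgebra.single (FreeMonoid.ofList w) 1 := by
  induction w with
  | nil => simp [wd_nil, MonoidAlgebra.one_def]
  | cons a w ih =>
    rw [wd_cons, map_mul, ih]
    simp [FreeAlgebra.equivMonoidAlgebraFreeMonoid, MonoidAlgebra.single_mul_single]

theorem nstar_add {n : ℕ} (a b : FreeAlg n) : nstar (a + b) = nstar a + nstar b := by
  unfold nstar
  rw [map_add, MonoidAlgebra.coeff_add, Finsupp.mapRange_add (by simp), Finsupp.mapDomain_add]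
  simp

theorem nstar_smul {n : ℕ} (c : ℂ) (a : FreeAlg n) :
    nstar (c • a) = (starRingEnd ℂ c) • nstar a := by
  unfold nstar
  rw [map_smul, MonoidAlgebra.coeff_smul,
    Finsupp.mapRange_smul' (c := c) (d := starRingEnd ℂ c) _ (by simp), Finsupp.mapDomain_smul]
  simp

theorem nstar_wd {n : ℕ} (w : List (Fin n)) : nstar (wd w) = wd w.reverse := by
  unfold nstar
  rw [AlgEquiv.symm_apply_eq, equiv_wd, equiv_wd]
  simp
  rfl

/-- `nstar` as an additive map. -/
noncomputable def nstarHom (n : ℕ) : FreeAlg n →+ FreeAlg n := AddMonoidHom.mk' nstar nstar_add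

theorem nstar_sum {n : ℕ} {ι : Type*} (s : Finset ι) (g : ι → FreeAlg n) :
    nstar (∑ i ∈ s, g i) = ∑ i ∈ s, nstar (g i) := map_sum (nstarHom n) g s

theorem nstar_zero {n : ℕ} : nstar (0 : FreeAlg n) = 0 := map_zero (nstarHom n)

theorem wd_span {n : ℕ} (a : FreeAlg n) :
    a ∈ Submodule.span ℂ (Set.range (wd : List (Fin n) → FreeAlg n)) := by
  induction a using FreeAlgebra.induction with
  | grade0 r =>
    rw [Algebra.algebraMap_eq_smul_one]
    exact Submodule.smul_mem _ _ (Submodule.subset_span ⟨[], rfl⟩)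
  | grade1 x => exact Submodule.subset_span ⟨[x], by simp [wd]⟩
  | add a b ha hb => exact Submodule.add_mem _ ha hb
  | mul a b ha hb =>
    have := Submodule.mul_mem_mul ha hb
    rw [Submodule.span_mul_span] at this
    refine Submodule.span_mono ?_ this
    rintro _ ⟨_, ⟨u, rfl⟩, _, ⟨v, rfl⟩, rfl⟩
    exact ⟨u ++ v, wd_append u v⟩

theorem wd_induction {n : ℕ} {P : FreeAlg n → Prop} (a : FreeAlg n) (hw : ∀ w, P (wd w))
    (hadd : ∀ a b, P a → P b → P (a + b)) (hsmul : ∀ (c : ℂ) a, P a → P (c • a)) : P a := by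
  have h0 : P 0 := by simpa using hsmul 0 _ (hw [])
  refine Submodule.span_induction (p := fun a _ => P a) ?_ h0 (fun x y _ _ => hadd x y)
    (fun c x _ => hsmul c x) (wd_span a)
  rintro _ ⟨w, rfl⟩
  exact hw w

theorem nstar_mul {n : ℕ} (a b : FreeAlg n) : nstar (a * b) = nstar b * nstar a := by
  induction a using wd_induction with
  | hw u =>
    induction b using wd_induction with
    | hw v => rw [← wd_append, nstar_wd, nstar_wd, nstar_wd, ← wd_append, List.reverse_append]
    | hadd a b ha hb => rw [mul_add, nstar_add, ha, hb, nstar_add, add_mul]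
    | hsmul c a ha => rw [mul_smul_comm, nstar_smul, ha, nstar_smul, smul_mul_assoc]
  | hadd a b ha hb => rw [add_mul, nstar_add, ha, hb, nstar_add, mul_add]
  | hsmul c a ha => rw [smul_mul_assoc, nstar_smul, ha, nstar_smul, mul_smul_comm]

theorem nstar_nstar {n : ℕ} (a : FreeAlg n) : nstar (nstar a) = a := by
  induction a using wd_induction with
  | hw u => rw [nstar_wd, nstar_wd, List.reverse_reverse]
  | hadd a b ha hb => rw [nstar_add, nstar_add, ha, hb]
  | hsmul c a ha => rw [nstar_smul, nstar_smul, ha, Complex.conj_conj]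

/-! ### Degrees -/

theorem wd_mem {n δ : ℕ} {w : List (Fin n)} (h : w.length ≤ δ) : wd w ∈ degLE n δ :=
  Submodule.subset_span ⟨w, h, rfl⟩

theorem degLE_mono {n a b : ℕ} (h : a ≤ b) : degLE n a ≤ degLE n b :=
  Submodule.span_mono (by rintro _ ⟨w, hw, rfl⟩; exact ⟨w, hw.trans h, rfl⟩)

theorem degLE_mul {n a b : ℕ} {p q : FreeAlg n} (hp : p ∈ degLE n a) (hq : q ∈ degLE n b) :
    p * q ∈ degLE n (a + b) := by
  have := Submodule.mul_mem_mul hp hq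
  unfold degLE at this
  rw [Submodule.span_mul_span] at this
  refine Submodule.span_mono ?_ this
  rintro _ ⟨_, ⟨u, hu, rfl⟩, _, ⟨v, hv, rfl⟩, rfl⟩
  exact ⟨u ++ v, by simp; omega, (wd_append u v).symm⟩

theorem degLE_induction {n δ : ℕ} {P : FreeAlg n → Prop} (a : FreeAlg n) (ha : a ∈ degLE n δ)
    (hw : ∀ w : List (Fin n), w.length ≤ δ → P (wd w)) (h0 : P 0)
    (hadd : ∀ a b, P a → P b → P (a + b)) (hsmul : ∀ (c : ℂ) a, P a → P (c • a)) : P a := by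
  refine Submodule.span_induction (p := fun a _ => P a) ?_ h0 (fun x y _ _ => hadd x y)
    (fun c x _ => hsmul c x) ha
  rintro _ ⟨w, h, rfl⟩
  exact hw w h

theorem nstar_mem {n δ : ℕ} {a : FreeAlg n} (ha : a ∈ degLE n δ) : nstar a ∈ degLE n δ := by
  refine degLE_induction (P := fun a => nstar a ∈ degLE n δ) a ha (fun w h => ?_)
    (by rw [nstar_zero]; exact zero_mem _)
    (fun a b h1 h2 => by rw [nstar_add]; exact add_mem h1 h2)
    (fun c a h => by rw [nstar_smul]; exact Submodule.smul_mem _ _ h)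
  rw [nstar_wd]; exact wd_mem (by simpa using h)

theorem exists_degLE {n : ℕ} (a : FreeAlg n) : ∃ δ, a ∈ degLE n δ := by
  induction a using wd_induction with
  | hw u => exact ⟨_, wd_mem le_rfl⟩
  | hadd a b ha hb =>
    obtain ⟨x, hx⟩ := ha
    obtain ⟨y, hy⟩ := hb
    exact ⟨max x y, add_mem (degLE_mono (le_max_left _ _) hx) (degLE_mono (le_max_right _ _) hy)⟩
  | hsmul c a ha =>
    obtain ⟨x, hx⟩ := ha
    exact ⟨x, Submodule.smul_mem _ _ hx⟩

theorem matDegLE_mul {n a b : ℕ} {I J K : Type*} [Fintype J] {p : Matrix I J (FreeAlg n)}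
    {q : Matrix J K (FreeAlg n)} (hp : matDegLE p a) (hq : matDegLE q b) :
    matDegLE (p * q) (a + b) := fun i j => by
  rw [Matrix.mul_apply]
  exact sum_mem fun k _ => degLE_mul (hp i k) (hq k j)

theorem matDegLE_mono {n a b : ℕ} {I J : Type*} {p : Matrix I J (FreeAlg n)}
    (hp : matDegLE p a) (h : a ≤ b) : matDegLE p b := fun i j => degLE_mono h (hp i j)

theorem matDegLE_adjM {n a : ℕ} {I J : Type*} {p : Matrix I J (FreeAlg n)}
    (hp : matDegLE p a) : matDegLE (adjM p) a := fun i j => nstar_mem (hp j i)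

theorem matDegLE_monicPoly {n e : ℕ} (A : Fin n → Matrix (Fin e) (Fin e) ℂ) :
    matDegLE (monicPoly A) 1 := fun i j => by
  unfold monicPoly
  rw [Matrix.add_apply, Matrix.sum_apply]
  refine add_mem ?_ (sum_mem fun k _ => ?_)
  · rw [Matrix.one_apply]
    split_ifs
    · exact wd_mem (w := []) (by simp)
    · exact zero_mem _
  · rw [Matrix.map_apply]
    refine Submodule.smul_mem _ _ ?_
    have := wd_mem (n := n) (δ := 1) (w := [k]) (by simp)
    simpa [wd] using this

theorem matDegLE_matDeg {n : ℕ} {I J : Type*} [Finite I] [Finite J] (f : Matrix I J (FreeAlg n)) :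
    matDegLE f (matDeg f) := by
  have : {δ | matDegLE f δ}.Nonempty := by
    choose D hD using fun p : I × J => exists_degLE (f p.1 p.2)
    obtain ⟨B, hB⟩ := (Set.finite_range D).bddAbove
    exact ⟨B, fun i j => degLE_mono (hB ⟨(i, j), rfl⟩) (hD (i, j))⟩
  exact Nat.sInf_mem this

/-! ### Evaluation at tuples with arbitrary index type -/

section Eval
variable {n : ℕ} {K : Type*} [Fintype K] [DecidableEq K]

/-- Evaluation, arbitrary index type. -/
noncomputable def evG {I J : Type*} (f : Matrix I J (FreeAlg n))
    (X : Fin n → Matrix K K ℂ) : Matrix (I × K) (J × K) ℂ :=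
  fun p q => FreeAlgebra.lift ℂ X (f p.1 q.1) p.2 q.2

/-- Evaluation of the monic pencil, arbitrary index type. -/
noncomputable def monG {e : ℕ} (A : Fin n → Matrix (Fin e) (Fin e) ℂ)
    (X : Fin n → Matrix K K ℂ) : Matrix (Fin e × K) (Fin e × K) ℂ :=
  1 + ∑ j, A j ⊗ₖ X j

variable {I J J' : Type*}

theorem evG_add (f g : Matrix I J (FreeAlg n)) (X : Fin n → Matrix K K ℂ) :
    evG (f + g) X = evG f X + evG g X := by
  ext p q; simp [evG]

theorem evG_smul (c : ℂ) (f : Matrix I J (FreeAlg n)) (X : Fin n → Matrix K K ℂ) :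
    evG (c • f) X = c • evG f X := by
  ext p q; simp [evG]

/-- Evaluation as a linear map. -/
noncomputable def evL (X : Fin n → Matrix K K ℂ) :
    Matrix I J (FreeAlg n) →ₗ[ℂ] Matrix (I × K) (J × K) ℂ where
  toFun f := evG f X
  map_add' f g := evG_add f g X
  map_smul' c f := evG_smul c f X

theorem evG_sum {ι : Type*} (s : Finset ι) (f : ι → Matrix I J (FreeAlg n))
    (X : Fin n → Matrix K K ℂ) : evG (∑ i ∈ s, f i) X = ∑ i ∈ s, evG (f i) X :=
  map_sum (evL X) f s

theorem evG_mul [Fintype J] (f : Matrix I J (FreeAlg n)) (g : Matrix J J' (FreeAlg n))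
    (X : Fin n → Matrix K K ℂ) : evG (f * g) X = evG f X * evG g X := by
  ext p q
  simp only [evG, Matrix.mul_apply, map_sum, map_mul, Matrix.sum_apply, Fintype.sum_prod_type]

theorem lift_wd_conj (X : Fin n → Matrix K K ℂ) (hX : ∀ j, (X j).IsHermitian)
    (w : List (Fin n)) : (FreeAlgebra.lift ℂ X (wd w))ᴴ = FreeAlgebra.lift ℂ X (wd w.reverse) := by
  induction w with
  | nil => simp [wd_nil]
  | cons a w ih =>
    rw [wd_cons, map_mul, Matrix.conjTranspose_mul, ih, List.reverse_cons, wd_append, map_mul,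
      FreeAlgebra.lift_ι_apply, (hX a).eq]
    simp [wd]

theorem lift_nstar (X : Fin n → Matrix K K ℂ) (hX : ∀ j, (X j).IsHermitian)
    (a : FreeAlg n) : FreeAlgebra.lift ℂ X (nstar a) = (FreeAlgebra.lift ℂ X a)ᴴ := by
  induction a using wd_induction with
  | hw u => rw [nstar_wd, lift_wd_conj X hX]
  | hadd a b ha hb => rw [nstar_add, map_add, map_add, ha, hb, Matrix.conjTranspose_add]
  | hsmul c a ha =>
    rw [nstar_smul, map_smul, map_smul, ha, Matrix.conjTranspose_smul]
    rfl

theorem evG_adjM (f : Matrix I J (FreeAlg n)) (X : Fin n → Matrix K K ℂ)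
    (hX : ∀ j, (X j).IsHermitian) : evG (adjM f) X = (evG f X)ᴴ := by
  ext p q
  simp only [evG, adjM, lift_nstar X hX, Matrix.conjTranspose_apply]

theorem evG_monicPoly {e : ℕ} (A : Fin n → Matrix (Fin e) (Fin e) ℂ)
    (X : Fin n → Matrix K K ℂ) : evG (monicPoly A) X = monG A X := by
  ext p q
  obtain ⟨p1, p2⟩ := p
  obtain ⟨q1, q2⟩ := q
  simp only [evG, monicPoly, monG, Matrix.add_apply, Matrix.sum_apply, map_add, map_sum,
    Matrix.map_apply, map_smul, FreeAlgebra.lift_ι_apply, Matrix.smul_apply,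
    Matrix.kroneckerMap_apply, smul_eq_mul]
  congr 1
  by_cases h : p1 = q1
  · subst h; simp [Matrix.one_apply]
  · simp [h]

theorem hyp_general {d e : ℕ} (f : Matrix (Fin d) (Fin d) (FreeAlg n))
    (A : Fin n → Matrix (Fin e) (Fin e) ℂ)
    (H : ∀ (k : ℕ) (X : Fin n → Matrix (Fin k) (Fin k) ℂ), (∀ j, (X j).IsHermitian) →
        (monicK A X).PosSemidef → (evalM f X).PosSemidef)
    (X : Fin n → Matrix K K ℂ) (hX : ∀ j, (X j).IsHermitian)
    (hL : (monG A X).PosSemidef) : (evG f X).PosSemidef := by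
  let φ : K ≃ Fin (Fintype.card K) := Fintype.equivFin K
  let X' : Fin n → Matrix (Fin (Fintype.card K)) (Fin (Fintype.card K)) ℂ :=
    fun j => Matrix.reindexAlgEquiv ℂ ℂ φ (X j)
  have h1 : ∀ a : FreeAlg n, FreeAlgebra.lift ℂ X' a =
      Matrix.reindexAlgEquiv ℂ ℂ φ (FreeAlgebra.lift ℂ X a) := by
    intro a
    have : FreeAlgebra.lift ℂ X' =
        ((Matrix.reindexAlgEquiv ℂ ℂ φ : _ →ₐ[ℂ] _)).comp (FreeAlgebra.lift ℂ X) := by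
      ext : 1
      funext j
      simp [X']
    rw [this]; rfl
  have h2 := H _ X' (fun j => (hX j).submatrix _) (by
    have : monicK A X' = (monG A X).submatrix (Prod.map id φ.symm) (Prod.map id φ.symm) := by
      ext p q
      obtain ⟨p1, p2⟩ := p
      obtain ⟨q1, q2⟩ := q
      simp [monicK, monG, Matrix.sum_apply, X', Matrix.one_apply]
    rw [this]
    exact hL.submatrix _)
  have : evG f X = (evalM f X').submatrix (Prod.map id φ) (Prod.map id φ) := by
    ext p q
    simp [evG, evalM, h1]
  rw [this]
  exact h2.submatrix _

end Eval


/-! ### The truncated Fock space tuple -/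

/-- Words of length at most `m`. -/
abbrev Wd (n m : ℕ) := {w : List (Fin n) // w.length ≤ m}

noncomputable instance instFintypeWd (n m : ℕ) : Fintype (Wd n m) :=
  (List.finite_length_le (Fin n) m).fintype

/-- The empty word. -/
def nilW (n m : ℕ) : Wd n m := ⟨[], by simp⟩

/-- Shift plus its adjoint. -/
noncomputable def fockS (n m : ℕ) (a : Fin n) : Matrix (Wd n m) (Wd n m) ℂ :=
  fun u x => (if u.1 = a :: x.1 then 1 else 0) + (if x.1 = a :: u.1 then 1 else 0)

theorem fockS_herm (n m : ℕ) (a : Fin n) : (fockS n m a).IsHermitian := by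
  ext u x
  simp only [Matrix.conjTranspose_apply, fockS, star_add]
  rw [add_comm]
  congr 1 <;> split_ifs <;> simp

theorem fock_entry (n m : ℕ) (c : ℂ) (w : List (Fin n)) (u : Wd n m)
    (h : w.length ≤ u.1.length) :
    FreeAlgebra.lift ℂ (fun a => c • fockS n m a) (wd w) u (nilW n m) =
      if u.1 = w then c ^ w.length else 0 := by
  induction w generalizing u with
  | nil =>
    simp only [wd_nil, map_one, Matrix.one_apply, nilW, Subtype.ext_iff, List.length_nil, pow_zero]
  | cons a w ih =>
    simp only [List.length_cons] at h
    rw [wd_cons, map_mul, FreeAlgebra.lift_ι_apply, Matrix.mul_apply]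
    simp only [Matrix.smul_apply, fockS, smul_eq_mul]
    have key : ∀ x : Wd n m,
        c * ((if u.1 = a :: x.1 then 1 else 0) + (if x.1 = a :: u.1 then 1 else 0)) *
          (FreeAlgebra.lift ℂ (fun a => c • fockS n m a) (wd w)) x (nilW n m) =
        if u.1 = a :: x.1 then (if x.1 = w then c ^ (w.length + 1) else 0) else 0 := by
      intro x
      by_cases h1 : u.1 = a :: x.1
      · have h2 : ¬ x.1 = a :: u.1 := by
          intro h3
          have := congrArg List.length h1
          have := congrArg List.length h3
          simp at *
          omega
        have h4 : w.length ≤ x.1.length := by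
          have := congrArg List.length h1
          simp at this
          omega
        rw [ih x h4]
        rw [if_pos h1, if_neg h2, if_pos h1]
        split_ifs
        · ring
        · simp
      · by_cases h2 : x.1 = a :: u.1
        · have h4 := congrArg List.length h2
          simp only [List.length_cons] at h4
          rw [ih x (by omega)]
          have h5 : ¬ x.1 = w := by
            intro h6
            rw [h6] at h4
            omega
          simp [h1, h5]
        · simp [h1, h2]
    rw [Finset.sum_congr rfl (fun x _ => key x)]
    by_cases hu : u.1 = a :: w
    · rw [if_pos hu]
      have hw : w.length ≤ m := by
        have := u.2
        have := congrArg List.length hu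
        simp at this
        omega
      rw [Finset.sum_eq_single (⟨w, hw⟩ : Wd n m)]
      · simp [hu]
      · intro b _ hb
        have : ¬ b.1 = w := fun h => hb (Subtype.ext h)
        simp [this]
      · simp
    · rw [if_neg hu]
      refine Finset.sum_eq_zero fun x _ => ?_
      split_ifs with h1 h2
      · exact absurd (by rw [h1, h2]) hu
      · rfl
      · rfl

theorem degLE_exists_coeff {n m : ℕ} {p : FreeAlg n} (hp : p ∈ degLE n m) :
    ∃ c : Wd n m → ℂ, p = ∑ w, c w • wd w.1 := by
  have : degLE n m = Submodule.span ℂ (Set.range fun w : Wd n m => wd w.1) := by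
    unfold degLE
    congr 1
    ext a
    constructor
    · rintro ⟨w, hw, rfl⟩; exact ⟨⟨w, hw⟩, rfl⟩
    · rintro ⟨w, rfl⟩; exact ⟨w.1, w.2, rfl⟩
  rw [this, Submodule.mem_span_range_iff_exists_fun] at hp
  obtain ⟨c, hc⟩ := hp
  exact ⟨c, hc.symm⟩

theorem fock_inj_coeff {n δ m : ℕ} (hδ : δ ≤ m) (t : ℂ) (ht : t ≠ 0) (c : Wd n δ → ℂ)
    (h : FreeAlgebra.lift ℂ (fun a => t • fockS n m a) (∑ w, c w • wd w.1) = 0) : c = 0 := by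
  by_contra hc
  have hne : (Finset.univ.filter fun w => c w ≠ 0).Nonempty := by
    obtain ⟨w, hw⟩ := Function.ne_iff.1 hc
    exact ⟨w, by simpa using hw⟩
  obtain ⟨w, hw, hmax⟩ := Finset.exists_max_image _ (fun w : Wd n δ => w.1.length) hne
  simp only [Finset.mem_filter, Finset.mem_univ, true_and] at hw hmax
  have h1 := congrFun (congrFun h ⟨w.1, w.2.trans hδ⟩) (nilW n m)
  rw [map_sum, Matrix.sum_apply, Finset.sum_eq_single w] at h1
  · rw [map_smul, Matrix.smul_apply, fock_entry n m t w.1 ⟨w.1, w.2.trans hδ⟩ le_rfl] at h1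
    simp [hw, ht] at h1
  · intro b _ hb
    rw [map_smul, Matrix.smul_apply]
    by_cases hcb : c b = 0
    · simp [hcb]
    · rw [fock_entry n m t b.1 ⟨w.1, w.2.trans hδ⟩ (hmax b hcb), if_neg, smul_zero]
      exact fun h => hb (Subtype.ext h.symm)
  · simp

theorem fock_inj {n m : ℕ} (t : ℂ) (ht : t ≠ 0) {p : FreeAlg n} (hp : p ∈ degLE n m)
    (h : FreeAlgebra.lift ℂ (fun a => t • fockS n m a) p = 0) : p = 0 := by
  obtain ⟨c, rfl⟩ := degLE_exists_coeff hp
  rw [fock_inj_coeff le_rfl t ht c h]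
  simp

theorem evG_inj {n m : ℕ} (t : ℂ) (ht : t ≠ 0) {I J : Type*} {p : Matrix I J (FreeAlg n)}
    (hp : matDegLE p m) (h : evG p (fun a => t • fockS n m a) = 0) : p = 0 := by
  ext i j
  refine fock_inj t ht (hp i j) ?_
  ext u v
  exact congrFun (congrFun h (i, u)) (j, v)

theorem wd_indep {n δ : ℕ} (c : Wd n δ → ℂ) (h : ∑ w, c w • wd w.1 = 0) : c = 0 :=
  fock_inj_coeff (m := δ) le_rfl 1 one_ne_zero c (by rw [h, map_zero])

theorem small_posDef {I : Type*} [Fintype I] [DecidableEq I] (H : Matrix I I ℂ)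
    (hH : H.IsHermitian) : ∃ t : ℝ, 0 < t ∧ (1 + (t : ℂ) • H).PosDef := by
  obtain ⟨B, hB⟩ : ∃ B : ℝ, ∀ i, |hH.eigenvalues i| ≤ B := by
    obtain ⟨B, hB⟩ := (Set.finite_range fun i => |hH.eigenvalues i|).bddAbove
    exact ⟨B, fun i => hB ⟨i, rfl⟩⟩
  have hB1 : (0 : ℝ) < 1 + |B| := by positivity
  refine ⟨(1 + |B|)⁻¹, by positivity, ?_⟩
  have h2 : (((1 + |B| : ℝ) : ℂ) • (1 : Matrix I I ℂ) + H).PosDef := by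
    have e : (((1 + |B| : ℝ) : ℂ) • (1 : Matrix I I ℂ) + H) =
        hH.eigenvectorUnitary.1 * (Matrix.diagonal fun i =>
          (((1 + |B| + hH.eigenvalues i : ℝ)) : ℂ)) * (hH.eigenvectorUnitary.1)ᴴ := by
      have e1 : (Matrix.diagonal fun i => (((1 + |B| + hH.eigenvalues i : ℝ)) : ℂ)) =
        ((1 + |B| : ℝ) : ℂ) • (1 : Matrix I I ℂ) +
          Matrix.diagonal (fun i => ((hH.eigenvalues i : ℝ) : ℂ)) := by
        ext i j
        by_cases h : i = j
        · subst h; simp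
        · simp [h]
      have e2 := hH.spectral_theorem
      rw [Unitary.conjStarAlgAut_apply] at e2
      have e3 : hH.eigenvectorUnitary.1 * (hH.eigenvectorUnitary.1)ᴴ = 1 :=
        (Unitary.mem_iff.1 hH.eigenvectorUnitary.2).2
      rw [e1, mul_add, add_mul, Matrix.mul_smul, Matrix.smul_mul, mul_one, e3]
      congr 1
    rw [e]
    refine Matrix.PosDef.mul_mul_conjTranspose_same (B := hH.eigenvectorUnitary.1) ?_ ?_
    · refine Matrix.PosDef.diagonal fun i => ?_
      have h3 := hB i
      have h4 := neg_abs_le (hH.eigenvalues i)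
      have h5 := le_abs_self B
      have : 0 < 1 + |B| + hH.eigenvalues i := by linarith
      exact_mod_cast this
    · refine Matrix.vecMul_injective_of_isUnit ?_
      exact ⟨Unitary.toUnits hH.eigenvectorUnitary, rfl⟩
  have h3 := h2.smul (a := (((1 + |B|)⁻¹ : ℝ) : ℂ)) (by
    have : 0 < (1 + |B|)⁻¹ := by positivity
    exact_mod_cast this)
  convert h3 using 1
  rw [smul_add, smul_smul, ← Complex.ofReal_mul, inv_mul_cancel₀ hB1.ne']
  simp

theorem exists_fock {n e : ℕ} (m : ℕ) (A : Fin n → Matrix (Fin e) (Fin e) ℂ)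
    (hA : ∀ j, (A j).IsHermitian) : ∃ t : ℝ, 0 < t ∧
      (monG A (fun a => (t : ℂ) • fockS n m a)).PosDef := by
  obtain ⟨t, ht, h⟩ := small_posDef (∑ j, A j ⊗ₖ fockS n m j) (by
    rw [Matrix.IsHermitian, Matrix.conjTranspose_sum]
    refine Finset.sum_congr rfl fun j _ => ?_
    rw [Matrix.conjTranspose_kronecker, (hA j).eq, (fockS_herm n m j).eq])
  refine ⟨t, ht, ?_⟩
  convert h using 1
  unfold monG
  rw [Finset.smul_sum]
  congr 1
  refine Finset.sum_congr rfl fun j _ => ?_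
  rw [Matrix.kronecker_smul]

theorem fockY_herm {n m : ℕ} (t : ℝ) (j : Fin n) : ((t : ℂ) • fockS n m j).IsHermitian := by
  rw [Matrix.IsHermitian, Matrix.conjTranspose_smul, (fockS_herm n m j).eq]
  simp


/-! ### The truncated GNS construction -/

section GNS
open scoped MatrixOrder
variable {n d : ℕ}

/-- The entry functionals of `Λ`. -/
noncomputable def lam (Λ : Matrix (Fin d) (Fin d) (FreeAlg n) →ₗ[ℂ] ℂ) (i j : Fin d) :
    FreeAlg n →ₗ[ℂ] ℂ := Λ ∘ₗ Matrix.singleLinearMap ℂ i j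

theorem lam_sum (Λ : Matrix (Fin d) (Fin d) (FreeAlg n) →ₗ[ℂ] ℂ)
    (p : Matrix (Fin d) (Fin d) (FreeAlg n)) : Λ p = ∑ i, ∑ j, lam Λ i j (p i j) := by
  conv_lhs => rw [Matrix.matrix_eq_sum_single p]
  simp only [map_sum]
  rfl

theorem lam_star (Λ : Matrix (Fin d) (Fin d) (FreeAlg n) →ₗ[ℂ] ℂ)
    (hΛ : ∀ p, Λ (adjM p) = starRingEnd ℂ (Λ p)) (i j : Fin d) (a : FreeAlg n) :
    lam Λ j i (nstar a) = starRingEnd ℂ (lam Λ i j a) := by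
  have : adjM (Matrix.single i j a) = Matrix.single j i (nstar a) := by
    ext k l
    simp only [adjM, Matrix.single_apply]
    split_ifs with h1 h2 h2
    · rfl
    · exact absurd ⟨h1.2, h1.1⟩ h2
    · exact absurd ⟨h2.2, h2.1⟩ h1
    · exact nstar_zero
  simp only [lam, LinearMap.comp_apply]
  rw [← hΛ]
  congr 1
  exact this.symm

/-- Moment matrix with middle factor `R`. -/
noncomputable def momM {r : Type*} (δ : ℕ) (Λ : Matrix (Fin d) (Fin d) (FreeAlg n) →ₗ[ℂ] ℂ)
    (R : Matrix r r (FreeAlg n)) :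
    Matrix (r × (Fin d × Wd n δ)) (r × (Fin d × Wd n δ)) ℂ :=
  fun p q => lam Λ p.2.1 q.2.1 (nstar (wd p.2.2.1) * R p.1 q.1 * wd q.2.2.1)

/-- The matrix polynomial with given coefficients. -/
noncomputable def coefM {r : Type*} {δ : ℕ} (c : r × (Fin d × Wd n δ) → ℂ) :
    Matrix r (Fin d) (FreeAlg n) :=
  fun a j => ∑ v, c (a, (j, v)) • wd v.1

theorem coefM_deg {r : Type*} {δ : ℕ} (c : r × (Fin d × Wd n δ) → ℂ) : matDegLE (coefM c) δ :=
  fun _ _ => sum_mem fun v _ => Submodule.smul_mem _ _ (wd_mem v.2)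

theorem coefM_ne {r : Type*} {δ : ℕ} (c : r × (Fin d × Wd n δ) → ℂ) (hc : c ≠ 0) :
    coefM c ≠ 0 := by
  intro h
  apply hc
  funext ⟨a, j, v⟩
  exact congrFun (wd_indep (fun v => c (a, (j, v))) (congrFun (congrFun h a) j)) v

theorem momM_quad {r : Type*} [Fintype r] (δ : ℕ)
    (Λ : Matrix (Fin d) (Fin d) (FreeAlg n) →ₗ[ℂ] ℂ)
    (R : Matrix r r (FreeAlg n)) (c : r × (Fin d × Wd n δ) → ℂ) :
    star c ⬝ᵥ (momM δ Λ R *ᵥ c) = Λ (adjM (coefM c) * R * coefM c) := by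
  have h1 : ∀ i j, lam Λ i j ((adjM (coefM c) * R * coefM c) i j) =
      ∑ a, ∑ b, ∑ u, ∑ v, star (c (a, (i, u))) *
        (lam Λ i j (nstar (wd u.1) * R a b * wd v.1) * c (b, (j, v))) := by
    intro i j
    simp only [Matrix.mul_apply, adjM, coefM, Finset.sum_mul, Finset.mul_sum, map_sum,
      nstar_sum, nstar_smul, smul_mul_assoc, mul_smul_comm, map_smul, smul_eq_mul]
    refine Eq.trans ?_ Finset.sum_comm
    refine Finset.sum_congr rfl fun b _ => ?_
    rw [Finset.sum_comm]
    refine Finset.sum_congr rfl fun a _ => ?_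
    rw [Finset.sum_comm]
    refine Finset.sum_congr rfl fun u _ => Finset.sum_congr rfl fun v _ => ?_
    simp only [RCLike.star_def]
    ring
  rw [lam_sum]
  simp only [h1]
  simp only [dotProduct, Matrix.mulVec, Fintype.sum_prod_type, Finset.mul_sum, momM, Pi.star_apply]
  rw [eq_comm]
  calc _ = ∑ i, ∑ a, ∑ j, ∑ b, ∑ u, ∑ v, star (c (a, (i, u))) *
        (lam Λ i j (nstar (wd u.1) * R a b * wd v.1) * c (b, (j, v))) :=
        Finset.sum_congr rfl fun i _ => Finset.sum_comm
    _ = ∑ a, ∑ i, ∑ j, ∑ b, ∑ u, ∑ v, star (c (a, (i, u))) *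
        (lam Λ i j (nstar (wd u.1) * R a b * wd v.1) * c (b, (j, v))) := Finset.sum_comm
    _ = _ := by
      refine Finset.sum_congr rfl fun a _ => Finset.sum_congr rfl fun i _ => ?_
      rw [Finset.sum_comm]
      conv_rhs => rw [Finset.sum_comm]
      refine Finset.sum_congr rfl fun b _ => ?_
      rw [Finset.sum_comm]

theorem dot_single {W : Type*} [Fintype W] [DecidableEq W] (C M : Matrix W W ℂ) (p q : W) :
    star (C *ᵥ Pi.single p 1) ⬝ᵥ (M *ᵥ (C *ᵥ Pi.single q 1)) = (Cᴴ * M * C) p q := by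
  rw [Matrix.star_mulVec, ← Matrix.dotProduct_mulVec, Matrix.mulVec_mulVec, Matrix.mulVec_mulVec]
  have : (star (Pi.single p 1) : W → ℂ) = Pi.single p 1 := by
    rw [← Pi.single_star, star_one]
  rw [this, single_one_dotProduct, Matrix.mulVec_single_one, Matrix.mul_assoc]
  rfl

theorem split_word {δ : ℕ} (w : List (Fin n)) (h1 : δ < w.length) (h2 : w.length ≤ 2 * δ + 1) :
    ∃ (u : List (Fin n)) (a : Fin n) (v : List (Fin n)), w = u.reverse ++ a :: v ∧
      u.length ≤ δ ∧ v.length ≤ δ := by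
  obtain ⟨a, v, h⟩ : ∃ a v, w.drop (w.length - (δ + 1)) = a :: v := by
    cases h : w.drop (w.length - (δ + 1)) with
    | nil =>
      have := congrArg List.length h
      simp at this
      omega
    | cons a v => exact ⟨a, v, rfl⟩
  refine ⟨(w.take (w.length - (δ + 1))).reverse, a, v, ?_, ?_, ?_⟩
  · rw [List.reverse_reverse, ← h, List.take_append_drop]
  · simp; omega
  · have := congrArg List.length h
    simp at this
    omega

theorem gns {e δ : ℕ} (f : Matrix (Fin d) (Fin d) (FreeAlg n)) (hf : matDegLE f (2 * δ + 1))
    (A : Fin n → Matrix (Fin e) (Fin e) ℂ) (hA : ∀ j, (A j).IsHermitian)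
    (Λ : Matrix (Fin d) (Fin d) (FreeAlg n) →ₗ[ℂ] ℂ)
    (hΛ : ∀ p, Λ (adjM p) = starRingEnd ℂ (Λ p))
    (hpos : ∀ V : Matrix Unit (Fin d) (FreeAlg n), matDegLE V δ → V ≠ 0 →
      0 < (Λ (adjM V * V)).re)
    (hL : ∀ V : Matrix (Fin e) (Fin d) (FreeAlg n), matDegLE V δ →
      0 ≤ (Λ (adjM V * monicPoly A * V)).re) (hneg : (Λ f).re < 0) :
    ∃ X : Fin n → Matrix (Fin d × Wd n δ) (Fin d × Wd n δ) ℂ, (∀ j, (X j).IsHermitian) ∧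
      (monG A X).PosSemidef ∧ ¬ (evG f X).PosSemidef := by
  classical
  let G : Matrix (Fin d × Wd n δ) (Fin d × Wd n δ) ℂ :=
    fun p q => lam Λ p.1 q.1 (nstar (wd p.2.1) * wd q.2.1)
  let B : Fin n → Matrix (Fin d × Wd n δ) (Fin d × Wd n δ) ℂ :=
    fun k p q => lam Λ p.1 q.1 (nstar (wd p.2.1) * FreeAlgebra.ι ℂ k * wd q.2.1)
  have Gap : ∀ p q, G p q = lam Λ p.1 q.1 (nstar (wd p.2.1) * wd q.2.1) := fun _ _ => rfl
  have Bap : ∀ k p q, B k p q =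
      lam Λ p.1 q.1 (nstar (wd p.2.1) * FreeAlgebra.ι ℂ k * wd q.2.1) := fun _ _ _ => rfl
  have nι : ∀ k : Fin n, nstar (FreeAlgebra.ι ℂ k) = FreeAlgebra.ι ℂ k := by
    intro k
    simpa [wd] using nstar_wd [k]
  have hGh : G.IsHermitian := by
    ext p q
    rw [Matrix.conjTranspose_apply]
    simp only [G]
    rw [RCLike.star_def, ← lam_star Λ hΛ, nstar_mul, nstar_nstar]
  have hBh : ∀ k, (B k).IsHermitian := by
    intro k
    ext p q
    rw [Matrix.conjTranspose_apply]
    simp only [B]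
    rw [RCLike.star_def, ← lam_star Λ hΛ, nstar_mul, nstar_mul, nstar_nstar, nι, mul_assoc]
  have hG : G.PosDef := by
    refine Matrix.PosDef.of_dotProduct_mulVec_pos hGh fun c hc => ?_
    have h1 := momM_quad δ Λ (1 : Matrix Unit Unit (FreeAlg n)) (fun p => c p.2)
    have h2 : star c ⬝ᵥ (G *ᵥ c) = star (fun p : Unit × (Fin d × Wd n δ) => c p.2) ⬝ᵥ
        (momM δ Λ (1 : Matrix Unit Unit (FreeAlg n)) *ᵥ (fun p => c p.2)) := by
      simp [dotProduct, Matrix.mulVec, Fintype.sum_prod_type, G, momM]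
    have h3 := hpos (coefM fun p => c p.2) (coefM_deg _) (coefM_ne _ (by
      intro h
      apply hc
      funext p
      exact congrFun h ((), p)))
    rw [Matrix.mul_one, ← h2] at h1
    rw [← h1] at h3
    rw [Complex.lt_def]
    refine ⟨by simpa using h3, ?_⟩
    have := hGh.im_star_dotProduct_mulVec_self c
    simpa using this.symm
  let Q : Matrix (Fin e × (Fin d × Wd n δ)) (Fin e × (Fin d × Wd n δ)) ℂ :=
    (1 : Matrix (Fin e) (Fin e) ℂ) ⊗ₖ G + ∑ j, A j ⊗ₖ B j
  have hQm : Q = momM δ Λ (monicPoly A) := by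
    ext ⟨a, i, u⟩ ⟨b, j, v⟩
    simp only [Q, momM, monicPoly, Matrix.add_apply, Matrix.sum_apply, mul_add, add_mul,
      Finset.mul_sum, Finset.sum_mul, map_add, map_sum, Matrix.kroneckerMap_apply, Bap, Gap,
      Matrix.map_apply, mul_smul_comm, smul_mul_assoc, map_smul, smul_eq_mul]
    congr 1
    by_cases h : a = b
    · subst h; simp
    · simp [h]
  have hQh : Q.IsHermitian := by
    rw [Matrix.IsHermitian, Matrix.conjTranspose_add, Matrix.conjTranspose_sum,
      Matrix.conjTranspose_kronecker, hGh.eq, Matrix.conjTranspose_one]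
    congr 1
    refine Finset.sum_congr rfl fun j _ => ?_
    rw [Matrix.conjTranspose_kronecker, (hA j).eq, (hBh j).eq]
  have hQ : Q.PosSemidef := by
    refine Matrix.PosSemidef.of_dotProduct_mulVec_nonneg hQh fun c => ?_
    have h3 := hL (coefM c) (coefM_deg c)
    rw [← momM_quad, ← hQm] at h3
    rw [Complex.le_def]
    refine ⟨by simpa using h3, ?_⟩
    have := hQh.im_star_dotProduct_mulVec_self c
    simpa using this.symm
  obtain ⟨C, hC⟩ := CStarAlgebra.nonneg_iff_eq_star_mul_self.1 hG.posSemidef.nonneg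
  rw [Matrix.star_eq_conjTranspose] at hC
  have hCu : IsUnit C := by
    rw [Matrix.isUnit_iff_isUnit_det, isUnit_iff_ne_zero]
    intro h
    have := hG.det_pos
    rw [hC, Matrix.det_mul, h, mul_zero] at this
    exact lt_irrefl _ this
  have hCd : IsUnit C.det := (Matrix.isUnit_iff_isUnit_det C).1 hCu
  have c1 : C⁻¹ * C = 1 := Matrix.nonsing_inv_mul C hCd
  have c2 : C * C⁻¹ = 1 := Matrix.mul_nonsing_inv C hCd
  have c3 : Cᴴ * (C⁻¹)ᴴ = 1 := by rw [← Matrix.conjTranspose_mul, c1, Matrix.conjTranspose_one]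
  have c4 : (C⁻¹)ᴴ * Cᴴ = 1 := by rw [← Matrix.conjTranspose_mul, c2, Matrix.conjTranspose_one]
  let X : Fin n → Matrix (Fin d × Wd n δ) (Fin d × Wd n δ) ℂ := fun k => (C⁻¹)ᴴ * B k * C⁻¹
  have hX : ∀ j, (X j).IsHermitian := fun j => Matrix.isHermitian_conjTranspose_mul_mul _ (hBh j)
  have hXC : ∀ k, Cᴴ * X k * C = B k := by
    intro k
    simp only [X]
    rw [← mul_assoc, ← mul_assoc, c3, one_mul, mul_assoc, c1, mul_one]
  refine ⟨X, hX, ?_, ?_⟩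
  · have : monG A X = ((1 : Matrix (Fin e) (Fin e) ℂ) ⊗ₖ C⁻¹)ᴴ * Q *
        ((1 : Matrix (Fin e) (Fin e) ℂ) ⊗ₖ C⁻¹) := by
      simp only [Q, X, monG]
      rw [Matrix.conjTranspose_kronecker, mul_add, add_mul, Finset.mul_sum, Finset.sum_mul]
      congr 1
      · rw [← Matrix.mul_kronecker_mul, ← Matrix.mul_kronecker_mul, hC, ← mul_assoc, c4, one_mul,
          c2]
        simp
      · refine Finset.sum_congr rfl fun j _ => ?_
        rw [← Matrix.mul_kronecker_mul, ← Matrix.mul_kronecker_mul]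
        simp
    rw [this]
    exact hQ.conjTranspose_mul_mul_same _
  · intro hP
    let ψ : Fin d × Wd n δ → (Fin d × Wd n δ → ℂ) := fun p => C *ᵥ Pi.single p 1
    have hshift : ∀ (k : Fin n) (j : Fin d) (v : List (Fin n)) (hv : (k :: v).length ≤ δ),
        X k *ᵥ ψ (j, ⟨v, (by simp at hv; omega)⟩) = ψ (j, ⟨k :: v, hv⟩) := by
      intro k j v hv
      have h1 : B k *ᵥ Pi.single (j, ⟨v, (by simp at hv; omega)⟩) 1 =
          G *ᵥ Pi.single (j, ⟨k :: v, hv⟩) 1 := by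
        rw [Matrix.mulVec_single_one, Matrix.mulVec_single_one]
        funext p
        simp only [Matrix.col_apply, Bap, Gap, wd_cons, mul_assoc]
      simp only [ψ, X]
      rw [Matrix.mulVec_mulVec, mul_assoc, c1, mul_one, ← Matrix.mulVec_mulVec, h1, hC,
        Matrix.mulVec_mulVec, ← mul_assoc, c4, one_mul]
    have hword : ∀ (j : Fin d) (w : List (Fin n)) (hw : w.length ≤ δ),
        FreeAlgebra.lift ℂ X (wd w) *ᵥ ψ (j, nilW n δ) = ψ (j, ⟨w, hw⟩) := by
      intro j w
      induction w with
      | nil => intro hw; simp [wd_nil, nilW]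
      | cons k v ih =>
        intro hw
        rw [wd_cons, map_mul, ← Matrix.mulVec_mulVec, ih (by simp at hw; omega),
          FreeAlgebra.lift_ι_apply, hshift]
    have hent : ∀ (i j : Fin d) (a : FreeAlg n), a ∈ degLE n (2 * δ + 1) →
        star (ψ (i, nilW n δ)) ⬝ᵥ (FreeAlgebra.lift ℂ X a *ᵥ ψ (j, nilW n δ)) = lam Λ i j a := by
      intro i j a ha
      refine degLE_induction (P := fun a => star (ψ (i, nilW n δ)) ⬝ᵥ
        (FreeAlgebra.lift ℂ X a *ᵥ ψ (j, nilW n δ)) = lam Λ i j a) a ha ?_ ?_ ?_ ?_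
      · intro w hw
        by_cases hwδ : w.length ≤ δ
        · rw [hword j w hwδ]
          have := dot_single C 1 (i, nilW n δ) (j, ⟨w, hwδ⟩)
          rw [Matrix.one_mulVec, mul_one, ← hC] at this
          simp only [ψ]
          rw [this]
          simp only [G, nilW]
          rw [nstar_wd, List.reverse_nil, wd_nil, one_mul]
        · obtain ⟨u, k, v, rfl, hu, hv⟩ := split_word w (not_le.1 hwδ) hw
          have h1 : FreeAlgebra.lift ℂ X (wd (u.reverse ++ k :: v)) =
              (FreeAlgebra.lift ℂ X (wd u))ᴴ * (X k * FreeAlgebra.lift ℂ X (wd v)) := by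
            rw [lift_wd_conj X hX, wd_append, wd_cons, map_mul, map_mul, FreeAlgebra.lift_ι_apply]
          rw [h1, ← Matrix.mulVec_mulVec, Matrix.dotProduct_mulVec, ← Matrix.star_mulVec,
            ← Matrix.mulVec_mulVec, hword i u hu, hword j v hv]
          simp only [ψ]
          rw [dot_single, hXC]
          simp only [B]
          rw [nstar_wd, wd_append, wd_cons, mul_assoc]
      · simp
      · intro a b h1 h2
        rw [map_add, Matrix.add_mulVec, dotProduct_add, h1, h2, map_add]
      · intro c a h1
        rw [map_smul, Matrix.smul_mulVec, dotProduct_smul, h1, map_smul]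
    have h5 := hP.dotProduct_mulVec_nonneg (fun p => ψ (p.1, nilW n δ) p.2)
    have h6 : star (fun p : Fin d × (Fin d × Wd n δ) => ψ (p.1, nilW n δ) p.2) ⬝ᵥ
        (evG f X *ᵥ (fun p => ψ (p.1, nilW n δ) p.2)) = Λ f := by
      rw [lam_sum Λ f]
      simp only [← hent _ _ _ (hf _ _)]
      simp only [dotProduct, Matrix.mulVec, Fintype.sum_prod_type (α₁ := Fin d)
        (α₂ := Fin d × Wd n δ), Finset.mul_sum, evG, Pi.star_apply]
      refine Finset.sum_congr rfl fun i _ => ?_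
      rw [Finset.sum_comm]
    rw [h6, Complex.le_def] at h5
    exact absurd h5.1 (not_le.2 (by simpa using hneg))

end GNS


/-! ### Compactness -/

theorem isCompact_hull {E : Type*} [NormedAddCommGroup E] [NormedSpace ℝ E]
    [FiniteDimensional ℝ E] {T : Set E} (hT : IsCompact T) : IsCompact (convexHull ℝ T) := by
  rcases T.eq_empty_or_nonempty with rfl | ⟨t0, ht0⟩
  · simp
  let N := Module.finrank ℝ E + 1
  let Φ : (Fin N → ℝ) × (Fin N → E) → E := fun p => ∑ i, p.1 i • p.2 i
  have hΦ : Continuous Φ := by fun_prop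
  have hc : IsCompact (Φ '' (stdSimplex ℝ (Fin N) ×ˢ Set.pi Set.univ fun _ => T)) :=
    ((isCompact_stdSimplex ℝ (Fin N)).prod (isCompact_univ_pi fun _ => hT)).image hΦ
  convert hc using 1
  apply Set.Subset.antisymm
  · intro x hx
    obtain ⟨ι, _, z, w, hz, haff, hw, hw1, hx⟩ := eq_pos_convex_span_of_mem_convexHull hx
    have hcard : Fintype.card ι ≤ Fintype.card (Fin N) := by
      rw [Fintype.card_fin]
      exact haff.card_le_finrank_succ.trans (Nat.succ_le_succ (Submodule.finrank_le _))
    obtain ⟨g⟩ := Function.Embedding.nonempty_of_card_le hcard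
    refine ⟨(fun k => ∑ i, if g i = k then w i else 0, Function.extend g z fun _ => t0),
      ⟨⟨fun k => ?_, ?_⟩, fun k _ => ?_⟩, ?_⟩
    · refine Finset.sum_nonneg fun i _ => ?_
      split_ifs
      · exact (hw i).le
      · exact le_rfl
    · simp only
      rw [Finset.sum_comm]
      simpa using hw1
    · simp only
      by_cases h : ∃ i, g i = k
      · obtain ⟨i, rfl⟩ := h
        rw [g.injective.extend_apply]
        exact hz ⟨i, rfl⟩
      · rw [Function.extend_apply' _ _ _ h]
        exact ht0
    · simp only [Φ, Finset.sum_smul]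
      rw [Finset.sum_comm, ← hx]
      refine Finset.sum_congr rfl fun i _ => ?_
      rw [Finset.sum_eq_single (g i)]
      · rw [if_pos rfl, g.injective.extend_apply]
      · intro b _ hb
        rw [if_neg hb.symm, zero_smul]
      · simp
  · rintro _ ⟨⟨w, z⟩, ⟨hw, hz⟩, rfl⟩
    exact (convex_convexHull ℝ T).sum_mem (fun i _ => hw.1 i) hw.2
      fun i _ => subset_convexHull ℝ T (hz i trivial)

section Factor
open scoped MatrixOrder

theorem posDef_factor {I : Type*} [Fintype I] [DecidableEq I] {H : Matrix I I ℂ}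
    (hH : H.PosDef) : ∃ D D' : Matrix I I ℂ, H = Dᴴ * D ∧ D' * D = 1 := by
  obtain ⟨C, hC⟩ := CStarAlgebra.nonneg_iff_eq_star_mul_self.1 hH.posSemidef.nonneg
  rw [Matrix.star_eq_conjTranspose] at hC
  refine ⟨C, C⁻¹, hC, Matrix.nonsing_inv_mul C ?_⟩
  rw [isUnit_iff_ne_zero]
  intro h
  have := hH.det_pos
  rw [hC, Matrix.det_mul, h, mul_zero] at this
  exact lt_irrefl _ this

end Factor

section Sep

attribute [local instance] Matrix.normedAddCommGroup Matrix.normedSpace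

variable {I J : Type*} [Fintype I] [DecidableEq I] [Fintype J] [DecidableEq J]

/-- Trace-one hermitian squares. -/
def sqSet (S : Submodule ℂ (Matrix I J ℂ)) (H : Matrix I I ℂ) : Set (Matrix J J ℂ) :=
  {M | ∃ Z ∈ S, M = Zᴴ * H * Z ∧ M.trace = 1}

theorem trace_sq (Z : Matrix I J ℂ) : (Zᴴ * Z).trace = ((∑ j, ∑ i, ‖Z i j‖ ^ 2 : ℝ) : ℂ) := by
  simp only [Matrix.trace, Matrix.diag_apply, Matrix.mul_apply, Matrix.conjTranspose_apply,
    RCLike.star_def, RCLike.conj_mul]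
  push_cast
  rfl

theorem sqSet_compact (S : Submodule ℂ (Matrix I J ℂ)) (H : Matrix I I ℂ) (hH : H.PosDef) :
    IsCompact (sqSet S H) := by
  obtain ⟨D, D', rfl, hD⟩ := posDef_factor hH
  have hbox : IsCompact (Set.pi Set.univ fun _ : I => Set.pi Set.univ fun _ : J =>
      Metric.closedBall (0 : ℂ) 1) :=
    isCompact_univ_pi fun _ => isCompact_univ_pi fun _ => isCompact_closedBall _ _
  have hb2 : IsCompact ((fun Z : Matrix I J ℂ => D' * Z) ''
      (Set.pi Set.univ fun _ : I => Set.pi Set.univ fun _ : J => Metric.closedBall (0 : ℂ) 1)) :=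
    hbox.image (by fun_prop)
  have hcl : IsClosed {Z : Matrix I J ℂ | Z ∈ S ∧ (Zᴴ * (Dᴴ * D) * Z).trace = 1} := by
    refine IsClosed.inter ?_ ?_
    · exact Submodule.closed_of_finiteDimensional S
    · exact isClosed_eq (by fun_prop) continuous_const
  have hcomp : IsCompact {Z : Matrix I J ℂ | Z ∈ S ∧ (Zᴴ * (Dᴴ * D) * Z).trace = 1} := by
    refine hb2.of_isClosed_subset hcl ?_
    rintro Z ⟨_, hZ⟩
    refine ⟨D * Z, ?_, by simp only [← Matrix.mul_assoc, hD, Matrix.one_mul]⟩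
    have h1 : ((D * Z)ᴴ * (D * Z)).trace = 1 := by
      rw [← hZ, Matrix.conjTranspose_mul]
      simp only [Matrix.mul_assoc]
    rw [trace_sq] at h1
    have h2 : (∑ j, ∑ i, ‖(D * Z) i j‖ ^ 2 : ℝ) = 1 := by exact_mod_cast h1
    intro i _ j _
    rw [mem_closedBall_zero_iff]
    have h3 : ‖(D * Z) i j‖ ^ 2 ≤ 1 := by
      rw [← h2]
      refine le_trans ?_ (Finset.single_le_sum (f := fun j => ∑ i, ‖(D * Z) i j‖ ^ 2)
        (fun j _ => Finset.sum_nonneg fun i _ => by positivity) (Finset.mem_univ j))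
      exact Finset.single_le_sum (f := fun i => ‖(D * Z) i j‖ ^ 2)
        (fun i _ => by positivity) (Finset.mem_univ i)
    nlinarith [norm_nonneg ((D * Z) i j)]
  convert hcomp.image (f := fun Z : Matrix I J ℂ => Zᴴ * (Dᴴ * D) * Z) (by fun_prop) using 1
  ext M
  constructor
  · rintro ⟨Z, hZ, rfl, h⟩
    exact ⟨Z, ⟨hZ, h⟩, rfl⟩
  · rintro ⟨Z, ⟨hZ, h⟩, rfl⟩
    exact ⟨Z, hZ, rfl, h⟩

theorem sq_trace_pos {H : Matrix I I ℂ} (hH : H.PosDef) {Z : Matrix I J ℂ} (hZ : Z ≠ 0) :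
    ∃ t : ℝ, 0 < t ∧ (Zᴴ * H * Z).trace = t := by
  obtain ⟨D, D', rfl, hD⟩ := posDef_factor hH
  have h1 : Zᴴ * (Dᴴ * D) * Z = (D * Z)ᴴ * (D * Z) := by
    rw [Matrix.conjTranspose_mul]
    simp only [Matrix.mul_assoc]
  rw [h1]
  refine ⟨_, ?_, trace_sq _⟩
  have hnn : 0 ≤ (∑ j, ∑ i, ‖(D * Z) i j‖ ^ 2 : ℝ) :=
    Finset.sum_nonneg fun _ _ => Finset.sum_nonneg fun _ _ => by positivity
  refine lt_of_le_of_ne hnn fun h => hZ ?_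
  have h2 := trace_sq (D * Z)
  rw [← h, Complex.ofReal_zero,
    (Matrix.posSemidef_conjTranspose_mul_self (D * Z)).trace_eq_zero_iff,
    Matrix.conjTranspose_mul_self_eq_zero] at h2
  rw [← Matrix.one_mul Z, ← hD, Matrix.mul_assoc, h2, Matrix.mul_zero]

theorem sep_pos (S : Submodule ℂ (Matrix I J ℂ)) {H : Matrix I I ℂ} (hH : H.PosDef)
    (g : Matrix J J ℂ →ₗ[ℂ] ℂ) (u : ℝ) (hg : ∀ b ∈ sqSet S H, u < (g b).re)
    {Z : Matrix I J ℂ} (hZS : Z ∈ S) (hZ : Z ≠ 0) :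
    0 < (g (Zᴴ * H * Z)).re - u * (Zᴴ * H * Z).trace.re := by
  obtain ⟨t, ht, htr⟩ := sq_trace_pos hH hZ
  have hs : (((Real.sqrt t)⁻¹ : ℝ) : ℂ) * (((Real.sqrt t)⁻¹ : ℝ) : ℂ) = ((t⁻¹ : ℝ) : ℂ) := by
    rw [← Complex.ofReal_mul, ← mul_inv, Real.mul_self_sqrt ht.le]
  have hM : ((((Real.sqrt t)⁻¹ : ℝ) : ℂ) • Z)ᴴ * H * ((((Real.sqrt t)⁻¹ : ℝ) : ℂ) • Z) =
      ((t⁻¹ : ℝ) : ℂ) • (Zᴴ * H * Z) := by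
    rw [Matrix.conjTranspose_smul, Matrix.smul_mul, Matrix.smul_mul, Matrix.mul_smul, smul_smul,
      ← hs]
    simp
  have h1 := hg (((t⁻¹ : ℝ) : ℂ) • (Zᴴ * H * Z)) ⟨(((Real.sqrt t)⁻¹ : ℝ) : ℂ) • Z,
    S.smul_mem _ hZS, hM.symm, by
      rw [Matrix.trace_smul, htr, smul_eq_mul, ← Complex.ofReal_mul, inv_mul_cancel₀ ht.ne',
        Complex.ofReal_one]⟩
  rw [map_smul, smul_eq_mul, Complex.re_ofReal_mul] at h1
  rw [htr, Complex.ofReal_re]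
  have h2 := mul_lt_mul_of_pos_left h1 ht
  rw [← mul_assoc, mul_inv_cancel₀ ht.ne', one_mul] at h2
  linarith

theorem sep_exists {I' : Type*} [Fintype I'] [DecidableEq I']
    (S : Submodule ℂ (Matrix I J ℂ)) {H : Matrix I I ℂ} (hH : H.PosDef)
    (S' : Submodule ℂ (Matrix I' J ℂ)) {H' : Matrix I' I' ℂ} (hH' : H'.PosDef)
    (F : Matrix J J ℂ) (hF : F ∉ convexHull ℝ (sqSet S H ∪ sqSet S' H')) :
    ∃ (g : Matrix J J ℂ →ₗ[ℂ] ℂ) (u : ℝ), (g F).re < u ∧ (∀ b ∈ sqSet S H, u < (g b).re) ∧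
      ∀ b ∈ sqSet S' H', u < (g b).re := by
  have hc := isCompact_hull ((sqSet_compact S H hH).union (sqSet_compact S' H' hH'))
  obtain ⟨g, u, h1, h2⟩ := RCLike.geometric_hahn_banach_point_closed (𝕜 := ℂ)
    (convex_convexHull ℝ _) hc.isClosed hF
  exact ⟨g.toLinearMap, u, h1, fun b hb => h2 b (subset_convexHull ℝ _ (Or.inl hb)),
    fun b hb => h2 b (subset_convexHull ℝ _ (Or.inr hb))⟩

end Sep


/-! ### Certificates and the final assembly -/

section Final

variable {n d e : ℕ}

/-- Existence of a sum-of-squares certificate of degree `δ`. -/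
def Cert (A : Fin n → Matrix (Fin e) (Fin e) ℂ) (δ : ℕ) (p : Matrix (Fin d) (Fin d) (FreeAlg n)) :
    Prop :=
  ∃ (M N : ℕ) (s : Fin M → Matrix (Fin d) (Fin d) (FreeAlg n))
      (v : Fin N → Matrix (Fin e) (Fin d) (FreeAlg n)),
    (∀ i, matDegLE (s i) δ) ∧ (∀ j, matDegLE (v j) δ) ∧
    p = ∑ i, adjM (s i) * s i + ∑ j, adjM (v j) * monicPoly A * v j

theorem adjM_smul {I J : Type*} (c : ℂ) (p : Matrix I J (FreeAlg n)) :
    adjM (c • p) = starRingEnd ℂ c • adjM p := by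
  ext i j
  simp only [adjM, Matrix.smul_apply, nstar_smul]

theorem matDegLE_smul {I J : Type*} {δ : ℕ} (c : ℂ) {p : Matrix I J (FreeAlg n)}
    (hp : matDegLE p δ) : matDegLE (c • p) δ := fun i j => Submodule.smul_mem _ _ (hp i j)

theorem matDegLE_add {I J : Type*} {δ : ℕ} {p q : Matrix I J (FreeAlg n)}
    (hp : matDegLE p δ) (hq : matDegLE q δ) : matDegLE (p + q) δ :=
  fun i j => Submodule.add_mem _ (hp i j) (hq i j)

theorem matDegLE_sum {I J ι : Type*} {δ : ℕ} (s : Finset ι) {p : ι → Matrix I J (FreeAlg n)}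
    (hp : ∀ i, matDegLE (p i) δ) : matDegLE (∑ i ∈ s, p i) δ := by
  intro i j
  rw [Matrix.sum_apply]
  exact Submodule.sum_mem _ fun k _ => hp k i j

/-- The submodule of matrices of degree at most `δ`. -/
noncomputable def degSub (I J : Type*) (n δ : ℕ) : Submodule ℂ (Matrix I J (FreeAlg n)) where
  carrier := {p | matDegLE p δ}
  add_mem' := matDegLE_add
  zero_mem' := fun _ _ => Submodule.zero_mem _
  smul_mem' := fun c _ hp => matDegLE_smul c hp

variable {A : Fin n → Matrix (Fin e) (Fin e) ℂ} {δ : ℕ}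

theorem cert_zero : Cert A δ (0 : Matrix (Fin d) (Fin d) (FreeAlg n)) :=
  ⟨0, 0, Fin.elim0, Fin.elim0, fun i => i.elim0, fun i => i.elim0, by simp⟩

theorem cert_add {p q : Matrix (Fin d) (Fin d) (FreeAlg n)} (hp : Cert A δ p) (hq : Cert A δ q) :
    Cert A δ (p + q) := by
  obtain ⟨M, N, s, v, hs, hv, rfl⟩ := hp
  obtain ⟨M', N', s', v', hs', hv', rfl⟩ := hq
  refine ⟨M + M', N + N', Fin.append s s', Fin.append v v', fun i => ?_, fun j => ?_, ?_⟩
  · refine Fin.addCases (fun i => ?_) (fun i => ?_) i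
    · rw [Fin.append_left]; exact hs i
    · rw [Fin.append_right]; exact hs' i
  · refine Fin.addCases (fun i => ?_) (fun i => ?_) j
    · rw [Fin.append_left]; exact hv i
    · rw [Fin.append_right]; exact hv' i
  · simp only [Fin.sum_univ_add, Fin.append_left, Fin.append_right]
    abel

theorem sqrt_sq_conj {r : ℝ} (hr : 0 ≤ r) :
    starRingEnd ℂ ((Real.sqrt r : ℝ) : ℂ) * ((Real.sqrt r : ℝ) : ℂ) = (r : ℂ) := by
  rw [Complex.conj_ofReal, ← Complex.ofReal_mul, Real.mul_self_sqrt hr]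

theorem cert_smul {p : Matrix (Fin d) (Fin d) (FreeAlg n)} (hp : Cert A δ p) {r : ℝ}
    (hr : 0 ≤ r) : Cert A δ ((r : ℂ) • p) := by
  obtain ⟨M, N, s, v, hs, hv, rfl⟩ := hp
  refine ⟨M, N, fun i => ((Real.sqrt r : ℝ) : ℂ) • s i, fun j => ((Real.sqrt r : ℝ) : ℂ) • v j,
    fun i => matDegLE_smul _ (hs i), fun j => matDegLE_smul _ (hv j), ?_⟩
  simp only [adjM_smul, Matrix.smul_mul, Matrix.mul_smul, smul_smul]
  rw [mul_comm ((Real.sqrt r : ℝ) : ℂ), sqrt_sq_conj hr, smul_add, Finset.smul_sum,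
    Finset.smul_sum]

theorem cert_L (v : Matrix (Fin e) (Fin d) (FreeAlg n)) (hv : matDegLE v δ) :
    Cert A δ (adjM v * monicPoly A * v) :=
  ⟨0, 1, Fin.elim0, fun _ => v, fun i => i.elim0, fun _ => hv, by simp⟩

theorem cert_row (V : Matrix Unit (Fin d) (FreeAlg n)) (hV : matDegLE V δ) :
    Cert A δ (adjM V * V) := by
  rcases Nat.eq_zero_or_pos d with rfl | hd
  · convert cert_zero (A := A) (δ := δ)
    ext i
    exact i.elim0
  refine ⟨1, 0, fun _ => Matrix.of fun i j => if i = ⟨0, hd⟩ then V () j else 0, Fin.elim0,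
    fun _ i j => ?_,
    fun i => i.elim0, ?_⟩
  · simp only [Matrix.of_apply]
    split_ifs
    · exact hV () j
    · exact Submodule.zero_mem _
  · ext i j
    simp only [Fin.sum_univ_zero, add_zero, Fin.sum_univ_one]
    rw [Matrix.mul_apply, Matrix.mul_apply, Finset.sum_eq_single (⟨0, hd⟩ : Fin d)]
    · simp [adjM]
    · intro b _ hb
      simp [hb]
    · simp

theorem cert_deg {p : Matrix (Fin d) (Fin d) (FreeAlg n)} (hp : Cert A δ p) :
    matDegLE p (2 * δ + 1) := by
  obtain ⟨M, N, s, v, hs, hv, rfl⟩ := hp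
  refine matDegLE_add (matDegLE_sum _ fun i => ?_) (matDegLE_sum _ fun j => ?_)
  · exact matDegLE_mono (matDegLE_mul (matDegLE_adjM (hs i)) (hs i)) (by omega)
  · exact matDegLE_mono (matDegLE_mul (matDegLE_mul (matDegLE_adjM (hv j)) (matDegLE_monicPoly A))
      (hv j)) (by omega)

theorem cert_psd {p : Matrix (Fin d) (Fin d) (FreeAlg n)} (hp : Cert A δ p)
    {K : Type*} [Fintype K] [DecidableEq K] (X : Fin n → Matrix K K ℂ)
    (hX : ∀ j, (X j).IsHermitian) (hL : (monG A X).PosSemidef) : (evG p X).PosSemidef := by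
  obtain ⟨M, N, s, v, hs, hv, rfl⟩ := hp
  rw [evG_add, evG_sum, evG_sum]
  refine Matrix.PosSemidef.add (Matrix.posSemidef_sum _ fun i _ => ?_)
    (Matrix.posSemidef_sum _ fun j _ => ?_)
  · rw [evG_mul, evG_adjM _ _ hX]
    exact Matrix.posSemidef_conjTranspose_mul_self _
  · rw [evG_mul, evG_mul, evG_adjM _ _ hX, evG_monicPoly]
    exact hL.conjTranspose_mul_mul_same _

/-- Hermitian symmetrisation of a functional, shifted by a multiple of the trace. -/
noncomputable def symF {J : Type*} [Fintype J] (g : Matrix J J ℂ →ₗ[ℂ] ℂ) (u : ℝ) :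
    Matrix J J ℂ →ₗ[ℂ] ℂ where
  toFun M := (g M + starRingEnd ℂ (g Mᴴ)) / 2 - u * M.trace
  map_add' M M' := by
    simp only [map_add, Matrix.conjTranspose_add, Matrix.trace_add]; ring
  map_smul' c M := by
    simp only [map_smul, Matrix.conjTranspose_smul, Matrix.trace_smul, smul_eq_mul, map_mul,
      RingHom.id_apply, RCLike.star_def, Complex.conj_conj]
    ring

theorem symF_star {J : Type*} [Fintype J] (g : Matrix J J ℂ →ₗ[ℂ] ℂ) (u : ℝ)
    (M : Matrix J J ℂ) : symF g u Mᴴ = starRingEnd ℂ (symF g u M) := by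
  simp only [symF, LinearMap.coe_mk, AddHom.coe_mk, map_sub, map_div₀, map_add, map_mul,
    Complex.conj_conj, Complex.conj_ofReal, Matrix.conjTranspose_conjTranspose,
    Matrix.trace_conjTranspose, RCLike.star_def, map_ofNat]
  ring

theorem symF_re {J : Type*} [Fintype J] (g : Matrix J J ℂ →ₗ[ℂ] ℂ) (u : ℝ)
    {M : Matrix J J ℂ} (hM : M.IsHermitian) :
    (symF g u M).re = (g M).re - u * M.trace.re := by
  simp only [symF, LinearMap.coe_mk, AddHom.coe_mk, hM.eq, Complex.add_conj, Complex.sub_re,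
    Complex.re_ofReal_mul]
  simp

theorem exists_cert (f : Matrix (Fin d) (Fin d) (FreeAlg n)) (hf : matDegLE f (2 * δ + 1))
    (hA : ∀ j, (A j).IsHermitian)
    (H : ∀ (k : ℕ) (X : Fin n → Matrix (Fin k) (Fin k) ℂ), (∀ j, (X j).IsHermitian) →
        (monicK A X).PosSemidef → (evalM f X).PosSemidef) : Cert A δ f := by
  obtain ⟨t, ht, hY⟩ := exists_fock (2 * δ + 1) A hA
  have htc : (t : ℂ) ≠ 0 := by exact_mod_cast ht.ne'
  set Y := fun a => (t : ℂ) • fockS n (2 * δ + 1) a with hYdef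
  have hYh : ∀ j, (Y j).IsHermitian := fun j => fockY_herm t j
  have hfY : (evG f Y).PosSemidef := hyp_general f A H Y hYh hY.posSemidef
  by_cases htr : (evG f Y).trace = 0
  · rw [hfY.trace_eq_zero_iff] at htr
    rw [evG_inj (t : ℂ) htc hf htr]
    exact cert_zero
  obtain ⟨τ, hτ⟩ : ∃ τ : ℝ, (evG f Y).trace = τ :=
    ⟨(evG f Y).trace.re, (Complex.nonneg_iff.1 hfY.trace_nonneg).elim fun _ h =>
      Complex.ext rfl (by simp [← h])⟩
  have hτ0 : 0 < τ := by
    have h1 := hfY.trace_nonneg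
    rw [hτ] at h1 htr
    have h2 : 0 ≤ τ := by exact_mod_cast h1
    exact lt_of_le_of_ne h2 fun h => htr (by rw [← h]; simp)
  let S1 := (degSub Unit (Fin d) n δ).map (evL Y)
  let S2 := (degSub (Fin e) (Fin d) n δ).map (evL Y)
  by_cases hF : ((τ⁻¹ : ℝ) : ℂ) • evG f Y ∈ convexHull ℝ (sqSet S1 1 ∪ sqSet S2 (monG A Y))
  · have hconv : Convex ℝ {M | ∃ p : Matrix (Fin d) (Fin d) (FreeAlg n),
        Cert A δ p ∧ M = evG p Y} := by
      rintro _ ⟨p, hp, rfl⟩ _ ⟨q, hq, rfl⟩ a b ha hb _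
      refine ⟨(a : ℂ) • p + (b : ℂ) • q, cert_add (cert_smul hp ha) (cert_smul hq hb), ?_⟩
      rw [evG_add, evG_smul, evG_smul]
      rfl
    have hsub : sqSet S1 1 ∪ sqSet S2 (monG A Y) ⊆ {M | ∃ p : Matrix (Fin d) (Fin d) (FreeAlg n),
        Cert A δ p ∧ M = evG p Y} := by
      rintro M (⟨_, ⟨V, hV, rfl⟩, rfl, _⟩ | ⟨_, ⟨V, hV, rfl⟩, rfl, _⟩)
      · refine ⟨_, cert_row V hV, ?_⟩
        rw [evG_mul, evG_adjM _ _ hYh, Matrix.mul_one]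
        rfl
      · refine ⟨_, cert_L V hV, ?_⟩
        rw [evG_mul, evG_mul, evG_adjM _ _ hYh, evG_monicPoly]
        rfl
    obtain ⟨p, hp, hpF⟩ := convexHull_min hsub hconv hF
    have h1 : f + (-(τ : ℂ)) • p = 0 := by
      refine evG_inj (t : ℂ) htc (matDegLE_add hf (matDegLE_smul _ (cert_deg hp))) ?_
      rw [evG_add, evG_smul, ← hpF, smul_smul, neg_mul, ← Complex.ofReal_mul,
        mul_inv_cancel₀ hτ0.ne']
      simp [hYdef]
    rw [neg_smul, ← sub_eq_add_neg, sub_eq_zero] at h1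
    rw [h1]
    exact cert_smul hp hτ0.le
  · exfalso
    obtain ⟨g, u, h1, h2, h3⟩ := sep_exists S1 Matrix.PosDef.one S2 hY _ hF
    have key : ∀ {I : Type} [Fintype I] [DecidableEq I] (V : Matrix I (Fin d) (FreeAlg n)),
        matDegLE V δ → V ≠ 0 → evG V Y ≠ 0 := fun V hV h0 h =>
      h0 (evG_inj (t : ℂ) htc (matDegLE_mono hV (by omega)) h)
    suffices hg : ∃ X : Fin n → Matrix (Fin d × Wd n δ) (Fin d × Wd n δ) ℂ,
        (∀ j, (X j).IsHermitian) ∧ (monG A X).PosSemidef ∧ ¬ (evG f X).PosSemidef by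
      obtain ⟨X, hX, hXL, hXf⟩ := hg
      exact hXf (hyp_general f A H X hX hXL)
    refine gns f hf A hA ((symF g u) ∘ₗ (evL Y)) ?_ ?_ ?_ ?_
    · intro p
      change symF g u (evG (adjM p) Y) = starRingEnd ℂ (symF g u (evG p Y))
      rw [evG_adjM _ _ hYh, symF_star]
    · intro V hV hV0
      change 0 < (symF g u (evG (adjM V * V) Y)).re
      rw [evG_mul, evG_adjM _ _ hYh,
        symF_re _ _ (Matrix.isHermitian_conjTranspose_mul_self (evG V Y))]
      have := sep_pos S1 Matrix.PosDef.one g u h2 (Z := evG V Y) ⟨V, hV, rfl⟩ (key V hV hV0)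
      rwa [Matrix.mul_one] at this
    · intro V hV
      change 0 ≤ (symF g u (evG (adjM V * monicPoly A * V) Y)).re
      rw [evG_mul, evG_mul, evG_adjM _ _ hYh, evG_monicPoly]
      by_cases hV0 : evG V Y = 0
      · rw [hV0]; simp
      rw [symF_re _ _ (hY.posSemidef.conjTranspose_mul_mul_same (evG V Y)).1]
      exact (sep_pos S2 hY g u h3 (Z := evG V Y) ⟨V, hV, rfl⟩ hV0).le
    · change (symF g u (evG f Y)).re < 0
      rw [symF_re _ _ hfY.1, hτ, Complex.ofReal_re]
      rw [map_smul, smul_eq_mul, Complex.re_ofReal_mul] at h1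
      have h4 := mul_lt_mul_of_pos_left h1 hτ0
      rw [← mul_assoc, mul_inv_cancel₀ hτ0.ne', one_mul] at h4
      linarith

end Final


/-- convex Positivstellensatz: `f ⪰ 0` on the free spectrahedron of the
monic hermitian pencil `L` iff `f = ∑ᵢ sᵢ*sᵢ + ∑ⱼ vⱼ*Lvⱼ` with all degrees at most
`⌊deg f / 2⌋`. -/
theorem convex_positivstellensatz {n d e : ℕ}
    (f : Matrix (Fin d) (Fin d) (FreeAlg n)) (hf : IsHermPoly f)
    (A : Fin n → Matrix (Fin e) (Fin e) ℂ) (hA : ∀ j, (A j).IsHermitian) :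
    (∀ (k : ℕ) (X : Fin n → Matrix (Fin k) (Fin k) ℂ), (∀ j, (X j).IsHermitian) →
        (monicK A X).PosSemidef → (evalM f X).PosSemidef) ↔
      (∃ (M N : ℕ) (s : Fin M → Matrix (Fin d) (Fin d) (FreeAlg n))
          (v : Fin N → Matrix (Fin e) (Fin d) (FreeAlg n)),
        (∀ i, matDegLE (s i) (matDeg f / 2)) ∧
        (∀ j, matDegLE (v j) (matDeg f / 2)) ∧
        f = ∑ i, adjM (s i) * s i + ∑ j, adjM (v j) * monicPoly A * v j) := by
  refine ⟨fun H => exists_cert f ?_ hA H, fun hc k X hX hL => ?_⟩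
  · exact matDegLE_mono (matDegLE_matDeg f) (by omega)
  · exact cert_psd (δ := matDeg f / 2) hc X hX hL
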